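/- (Theorem 1, Gelfand-width bounds for adaptive sensing.) Let X be a real normed vector space, m a natural number, a > 0 a real number, and K ⊆ X a subset with K = −K and K + K ⊆ a • K. Then d^m(K) ≤ E_ada^m(K) ≤ E^m(K) ≤ a · d^m(K). -/

import Mathlib

/-!
For the lower bound, freeze an adaptive scheme along the branch where all outcomes are zero. This
gives a linear map `A` such that the scheme returns `0` at every point of `ker A`. If
`x ∈ K ∩ ker A`, then `x` and `-x` both lie in `K` and are indistinguishable, so any reconstruction
has error at least `‖x‖` on one of them. The middle inequality holds since a linear map is an
adaptive scheme whose functionals ignore the previous outcomes. For the upper bound, reconstruct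
`x ∈ K` by any `z ∈ K` with `A z = A x`: then `x - z ∈ K + K ⊆ a • K`, so `x - z = a • w` with
`w ∈ K ∩ ker A`.
-/

open scoped ENNReal Pointwise

/-- An adaptive measurement scheme of length `m` on `X`: the `j`-th linear functional
is selected based on the vector of previous `j` measurement outcomes. -/
def AdaptiveScheme (X : Type*) [NormedAddCommGroup X] [NormedSpace ℝ X] (m : ℕ) :=
  ∀ j : Fin m, ((Fin (j : ℕ)) → ℝ) → (X →ₗ[ℝ] ℝ)

/-- The measurement map `F_Λ` induced by an adaptive scheme: the `j`-th outcome is obtained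
by applying the functional selected from the previous outcomes. -/
noncomputable def AdaptiveScheme.measMap {X : Type*} [NormedAddCommGroup X] [NormedSpace ℝ X]
    {m : ℕ} (Λ : AdaptiveScheme X m) (x : X) : Fin m → ℝ := fun j =>
  Λ j (fun i => Λ.measMap x ⟨i, i.isLt.trans j.isLt⟩) x
termination_by j => (j : ℕ)
decreasing_by exact i.isLt

/-- The Gelfand `m`-width of a subset `K` of `X`. -/
noncomputable def gelfandWidth {X : Type*} [NormedAddCommGroup X] [NormedSpace ℝ X]
    (m : ℕ) (K : Set X) : ℝ≥0∞ :=
  ⨅ A : X →ₗ[ℝ] (Fin m → ℝ), ⨆ x ∈ K ∩ (LinearMap.ker A : Set X), (‖x‖₊ : ℝ≥0∞)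

/-- The (non-adaptive) compressive `m`-width of a subset `K` of `X`. -/
noncomputable def compWidth {X : Type*} [NormedAddCommGroup X] [NormedSpace ℝ X]
    (m : ℕ) (K : Set X) : ℝ≥0∞ :=
  ⨅ (A : X →ₗ[ℝ] (Fin m → ℝ)) (Δ : (Fin m → ℝ) → X), ⨆ x ∈ K, (‖x - Δ (A x)‖₊ : ℝ≥0∞)

/-- The adaptive compressive `m`-width of a subset `K` of `X`. -/
noncomputable def adaCompWidth {X : Type*} [NormedAddCommGroup X] [NormedSpace ℝ X]
    (m : ℕ) (K : Set X) : ℝ≥0∞ :=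
  ⨅ (Λ : AdaptiveScheme X m) (Δ : (Fin m → ℝ) → X),
    ⨆ x ∈ K, (‖x - Δ (Λ.measMap x)‖₊ : ℝ≥0∞)

/-- If every functional on the branch of all-zero outcomes vanishes at `x`, then the adaptive scheme
never leaves that branch on `x`. -/
lemma AdaptiveScheme.measMap_eq_zero {X : Type*} [NormedAddCommGroup X] [NormedSpace ℝ X]
    {m : ℕ} (Λ : AdaptiveScheme X m) (x : X) (hx : ∀ j, Λ j 0 x = 0) : Λ.measMap x = 0 := by
  have key : ∀ (n : ℕ) (hn : n < m), Λ.measMap x ⟨n, hn⟩ = 0 := by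
    intro n
    induction n using Nat.strong_induction_on with
    | _ n ih =>
      intro hn
      rw [AdaptiveScheme.measMap]
      have h0 : (fun i : Fin n => Λ.measMap x ⟨i, i.isLt.trans hn⟩) = 0 :=
        funext fun i => ih i i.isLt _
      exact (congrArg (fun v => Λ ⟨n, hn⟩ v x) h0).trans (hx _)
  exact funext fun j => key j j.isLt

lemma gelfandWidth_le_adaCompWidth {X : Type*} [NormedAddCommGroup X] [NormedSpace ℝ X] {m : ℕ}
    (K : Set X) (hK : K = -K) : gelfandWidth m K ≤ adaCompWidth m K := by
  refine le_iInf₂ fun Λ Δ => ?_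
  refine (iInf_le _ (LinearMap.pi fun j => Λ j 0)).trans (iSup₂_le fun x hx => ?_)
  obtain ⟨hxK, hxA⟩ := hx
  have hx0 : ∀ j, Λ j 0 x = 0 := fun j => congrFun (LinearMap.mem_ker.mp hxA) j
  have hnK : -x ∈ K := by
    rw [hK]
    simpa using hxK
  have h1 := le_iSup₂ (f := fun y (_ : y ∈ K) => (‖y - Δ (Λ.measMap y)‖₊ : ℝ≥0∞)) x hxK
  have h2 := le_iSup₂ (f := fun y (_ : y ∈ K) => (‖y - Δ (Λ.measMap y)‖₊ : ℝ≥0∞)) (-x) hnK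
  rw [Λ.measMap_eq_zero x hx0] at h1
  rw [Λ.measMap_eq_zero (-x) fun j => by rw [map_neg, hx0, neg_zero]] at h2
  -- `2x` is the difference of the two errors, so one of them has norm at least `‖x‖`.
  have h3 : ‖x‖ ≤ max ‖x - Δ 0‖ ‖-x - Δ 0‖ := by
    have h4 := norm_sub_le (x - Δ 0) (-x - Δ 0)
    have h5 : x - Δ 0 - (-x - Δ 0) = (2 : ℝ) • x := by
      rw [two_smul]
      abel
    rw [h5, norm_smul, Real.norm_two] at h4
    have := le_max_left ‖x - Δ 0‖ ‖-x - Δ 0‖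
    have := le_max_right ‖x - Δ 0‖ ‖-x - Δ 0‖
    linarith
  rcases le_max_iff.mp h3 with h | h
  · exact le_trans (ENNReal.coe_le_coe.mpr h) h1
  · exact le_trans (ENNReal.coe_le_coe.mpr h) h2

lemma adaCompWidth_le_compWidth {X : Type*} [NormedAddCommGroup X] [NormedSpace ℝ X] {m : ℕ}
    (K : Set X) : adaCompWidth m K ≤ compWidth m K := by
  refine le_iInf₂ fun A Δ => ?_
  let Λ : AdaptiveScheme X m := fun j _ => LinearMap.proj j ∘ₗ A
  have hΛ : ∀ x, Λ.measMap x = A x := by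
    intro x
    funext j
    rw [AdaptiveScheme.measMap]
    rfl
  refine (iInf₂_le Λ Δ).trans_eq ?_
  simp only [hΛ]

/-- Reconstruct from `A x` by any element of `K` with the same measurements: the error is then
`a` times an element of `K ∩ ker A`. -/
lemma compWidth_le_mul_gelfandWidth {X : Type*} [NormedAddCommGroup X] [NormedSpace ℝ X] {m : ℕ}
    (K : Set X) (hK : K = -K) (a : ℝ) (ha : 0 < a) (hKK : K + K ⊆ a • K) :
    compWidth m K ≤ ENNReal.ofReal a * gelfandWidth m K := by
  classical
  unfold gelfandWidth
  rw [ENNReal.mul_iInf_of_ne (ENNReal.ofReal_pos.mpr ha).ne' ENNReal.ofReal_ne_top]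
  refine le_iInf fun A => ?_
  let Δ : (Fin m → ℝ) → X := fun y => if h : ∃ z ∈ K, A z = y then h.choose else 0
  refine (iInf₂_le A Δ).trans (iSup₂_le fun x hx => ?_)
  have hex : ∃ z ∈ K, A z = A x := ⟨x, hx, rfl⟩
  have hΔ : Δ (A x) = hex.choose := dif_pos hex
  obtain ⟨hzK, hzA⟩ := hex.choose_spec
  rw [← hΔ] at hzK hzA
  have hnK : -Δ (A x) ∈ K := by
    rw [hK]
    simpa using hzK
  obtain ⟨w, hwK, hw⟩ := hKK (Set.add_mem_add hx hnK)
  replace hw : a • w = x - Δ (A x) := hw.trans (sub_eq_add_neg _ _).symm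
  have hwA : w ∈ LinearMap.ker A := by
    have h : a • A w = 0 := by rw [← map_smul, hw, map_sub, hzA, sub_self]
    exact (smul_eq_zero.mp h).resolve_left ha.ne'
  have hnorm : (‖x - Δ (A x)‖₊ : ℝ≥0∞) = ENNReal.ofReal a * (‖w‖₊ : ℝ≥0∞) := by
    rw [← hw, nnnorm_smul, ENNReal.coe_mul]
    congr 1
    exact (Real.enorm_of_nonneg ha.le)
  rw [hnorm]
  gcongr
  exact le_iSup₂ (f := fun y (_ : y ∈ K ∩ (LinearMap.ker A : Set X)) => (‖y‖₊ : ℝ≥0∞))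
    w ⟨hwK, hwA⟩

/-- Theorem 1 (Gelfand-width bounds for adaptive sensing): if `K` is symmetric and
`K + K ⊆ a • K` with `a > 0`, then
`d^m(K) ≤ E_ada^m(K) ≤ E^m(K) ≤ a * d^m(K)`. -/
theorem gelfand_adaptive_width_bounds
    {X : Type*} [NormedAddCommGroup X] [NormedSpace ℝ X] {m : ℕ}
    (K : Set X) (hK : K = -K) (a : ℝ) (ha : 0 < a) (hKK : K + K ⊆ a • K) :
    gelfandWidth m K ≤ adaCompWidth m K ∧
      adaCompWidth m K ≤ compWidth m K ∧
      compWidth m K ≤ ENNReal.ofReal a * gelfandWidth m K := by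
  exact ⟨gelfandWidth_le_adaCompWidth K hK, adaCompWidth_le_compWidth K,
    compWidth_le_mul_gelfandWidth K hK a ha hKK⟩
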